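/- Let A be a finite-dimensional complete left-symmetric algebra over ℂ. Then there exists a Cartan subalgebra H of the commutator Lie algebra of A such that the root decomposition is canonical for H, i.e., for every function χ : H → ℂ one has ⋂_{x∈H} maxGenEigenspace(L(x), χ(x)) = ⋂_{x∈H} maxGenEigenspace(ad(x), χ(x)) as subspaces of A. -/

import Mathlib

/-!
A left-symmetric product on `A` makes `x ↦ (v ↦ x · v + x)` a representation of the commutator Lie
algebra by affine vector fields. Realise it as a linear representation `ρ` on `A × K`; then
`ρ y (p, 1) = (y · p + y, 0)`.

If `L y` is nilpotent on `y` itself, then `(0, 1)` lies in the generalized `0`-eigenspace of `ρ y`.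
Since `ρ` maps the `c`- and `d`-eigenspaces of `ad y` and `ρ y` to the `(c + d)`-eigenspace, and
`ρ x (0, 1) = (x, 0)`, the root spaces of `ad y` are contained in those of `L y`, hence equal to
them. It remains to find a Cartan subalgebra all of whose elements have this property.

Start from a Cartan subalgebra that is an Engel subalgebra, say of `y`. Fitting's lemma for `L y`
gives a point `p` with `(p, 1)` in the generalized `0`-eigenspace of `ρ y`. Completeness says that
`x ↦ x · p + x` is bijective for every `p`, so the group generated by the `exp (ρ x)` has open
orbits on the connected hyperplane `A × {1}` and acts transitively there. It normalizes the image of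
`ρ`, so moving `p` to `0` replaces `y` by its image under a Lie algebra automorphism, after which
`L y` is nilpotent on `y`. Every other element `h` of the Engel subalgebra `U` of `y` inherits the
property: `U` is a subalgebra for the product, Fitting's lemma for `L h` on `U` gives `p ∈ U` with
`(p, 1)` in the generalized `0`-eigenspace of `ρ h`, and `x ↦ x · p + x` maps `U` onto `U`.
-/

open NormedSpace Topology Module.End

section GenEigenspace

variable {R M N : Type*} [CommRing R] [AddCommGroup M] [Module R M] [AddCommGroup N] [Module R N]

theorem map_mem_maxGenEigenspace_iff {f : M →ₗ[R] N} (hf : Function.Injective f)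
    {S : Module.End R M} {T : Module.End R N} (h : ∀ m, f (S m) = T (f m)) {c : R} {m : M} :
    f m ∈ T.maxGenEigenspace c ↔ m ∈ S.maxGenEigenspace c := by
  have hpow (n : ℕ) : f (((S - c • 1) ^ n) m) = ((T - c • 1) ^ n) (f m) := by
    have hsemi : Function.Semiconj f ⇑(S - c • (1 : Module.End R M))
        ⇑(T - c • (1 : Module.End R N)) := fun m => by simp [h]
    simpa only [Module.End.coe_pow] using hsemi.iterate_right n m
  simp only [mem_maxGenEigenspace, ← hpow, map_eq_zero_iff f hf]

theorem mem_maxGenEigenspace_zero_of_apply_mem {T : Module.End R M} {m : M}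
    (h : T m ∈ T.maxGenEigenspace 0) : m ∈ T.maxGenEigenspace 0 := by
  simp only [mem_maxGenEigenspace, zero_smul, sub_zero] at h ⊢
  obtain ⟨n, hn⟩ := h
  exact ⟨n + 1, by rw [pow_succ, Module.End.mul_apply, hn]⟩

theorem exists_apply_add_mem_maxGenEigenspace_zero [IsArtinian R M] (T : Module.End R M) (m : M) :
    ∃ p, T p + m ∈ T.maxGenEigenspace 0 := by
  obtain ⟨n, hn, hpos⟩ :=
    (T.eventually_codisjoint_ker_pow_range_pow.and (Filter.eventually_ge_atTop 1)).exists
  obtain ⟨k, hk, _, ⟨r, rfl⟩, hkr⟩ :=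
    Submodule.mem_sup.mp (hn.eq_top ▸ Submodule.mem_top : m ∈ _)
  refine ⟨-(T ^ (n - 1)) r, ?_⟩
  have hrange : T ((T ^ (n - 1)) r) = (T ^ n) r := by
    rw [← Module.End.mul_apply, mul_pow_sub_one (by lia)]
  have hsum : T (-(T ^ (n - 1)) r) + m = k := by
    rw [map_neg, hrange, ← hkr]
    abel
  rw [hsum, mem_maxGenEigenspace]
  exact ⟨n, by simpa using hk⟩

end GenEigenspace

section Engel

variable {R L : Type*} [CommRing R] [LieRing L] [LieAlgebra R L]

theorem le_engel_of_isNilpotent (H : LieSubalgebra R L) [LieRing.IsNilpotent H] {x : L}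
    (hx : x ∈ H) : H ≤ LieSubalgebra.engel R x := fun z hz => by
  obtain ⟨n, hn⟩ := LieModule.isNilpotent_toEnd_of_isNilpotent R H H ⟨x, hx⟩
  have hmem : (⟨z, hz⟩ : H) ∈ (LieAlgebra.ad R H ⟨x, hx⟩).maxGenEigenspace 0 := by
    rw [mem_maxGenEigenspace]
    exact ⟨n, by simpa using! LinearMap.congr_fun hn ⟨z, hz⟩⟩
  exact (map_mem_maxGenEigenspace_iff (f := H.toSubmodule.subtype) Subtype.val_injective
    (T := LieAlgebra.ad R L x) fun _ => rfl).mpr hmem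

theorem isCartanSubalgebra_engel_iff [IsNoetherian R L] {x : L} :
    (LieSubalgebra.engel R x).IsCartanSubalgebra ↔
      ∀ y ∈ LieSubalgebra.engel R x, LieSubalgebra.engel R x ≤ LieSubalgebra.engel R y :=
  ⟨fun _ _ hy => le_engel_of_isNilpotent _ hy, fun h =>
    ⟨LieSubalgebra.isNilpotent_of_forall_le_engel _ h, LieSubalgebra.normalizer_engel R x⟩⟩

theorem map_mem_engel_map_iff {L' : Type*} [LieRing L'] [LieAlgebra R L'] (φ : L ≃ₗ⁅R⁆ L')
    {x z : L} : φ z ∈ LieSubalgebra.engel R (φ x) ↔ z ∈ LieSubalgebra.engel R x :=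
  map_mem_maxGenEigenspace_iff (f := (φ : L →ₗ[R] L')) φ.injective fun m => φ.map_lie x m

theorem isCartanSubalgebra_engel_map [IsNoetherian R L] {x : L}
    (hx : (LieSubalgebra.engel R x).IsCartanSubalgebra) (φ : L ≃ₗ⁅R⁆ L) :
    (LieSubalgebra.engel R (φ x)).IsCartanSubalgebra := by
  rw [isCartanSubalgebra_engel_iff] at hx ⊢
  intro y hy z hz
  obtain ⟨y, rfl⟩ := φ.surjective y
  obtain ⟨z, rfl⟩ := φ.surjective z
  have hyx := (map_mem_engel_map_iff φ).mp hy
  exact (map_mem_engel_map_iff φ).mpr (hx y hyx ((map_mem_engel_map_iff φ).mp hz))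

end Engel

section Exponential

variable {𝕜 : Type*} [RCLike 𝕜]

section Apply

variable {V W : Type*} [NormedAddCommGroup V] [NormedSpace 𝕜 V] [CompleteSpace V]
  [NormedAddCommGroup W] [NormedSpace 𝕜 W]

theorem hasSum_exp_apply (T : V →L[𝕜] V) (v : V) :
    HasSum (fun n : ℕ => (n.factorial : 𝕜)⁻¹ • (T ^ n) v) (exp T v) := by
  simpa using (exp_series_hasSum_exp' (𝕂 := 𝕜) T).mapL (ContinuousLinearMap.apply 𝕜 V v)

theorem exp_apply_mem_of_isClosed {S : Submodule 𝕜 V} (hS : IsClosed (S : Set V))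
    {T : V →L[𝕜] V} (hT : ∀ v ∈ S, T v ∈ S) {v : V} (hv : v ∈ S) : exp T v ∈ S := by
  have hpow (n : ℕ) : (T ^ n) v ∈ S := by
    rw [FunLike.coe_pow_eq_iterate]
    exact Set.MapsTo.iterate hT n hv
  exact hS.mem_of_tendsto (hasSum_exp_apply T v)
    (Filter.Eventually.of_forall fun s => S.sum_mem fun n _ => S.smul_mem _ (hpow n))

theorem map_exp_apply_of_map_apply_eq_zero {f : V →L[𝕜] W} {T : V →L[𝕜] V}
    (hT : ∀ v, f (T v) = 0) (v : V) : f (exp T v) = f v := by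
  refine ((hasSum_exp_apply T v).mapL f).unique ?_
  convert hasSum_single (f := fun n : ℕ => f ((n.factorial : 𝕜)⁻¹ • (T ^ n) v)) 0 ?_ using 1
  · simp
  · intro n hn
    obtain ⟨m, rfl⟩ := Nat.exists_eq_succ_of_ne_zero hn
    simp [pow_succ', hT]

theorem map_exp_apply_nhds_zero_of_surjective {E : Type*} [NormedAddCommGroup E] [NormedSpace 𝕜 E]
    [CompleteSpace E] [CompleteSpace W] (ρ : E →L[𝕜] V →L[𝕜] V) (f : V →L[𝕜] W) (v : V)
    (h : Function.Surjective fun x => f (ρ x v)) :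
    Filter.map (fun x => f (exp (ρ x) v)) (𝓝 0) = 𝓝 (f v) := by
  let ev : (V →L[𝕜] V) →L[𝕜] W := f.comp (ContinuousLinearMap.apply 𝕜 V v)
  have hexp : HasStrictFDerivAt exp (1 : (V →L[𝕜] V) →L[𝕜] V →L[𝕜] V) (ρ 0) := by
    rw [map_zero]
    exact hasStrictFDerivAt_exp_zero
  have hderiv : HasStrictFDerivAt (fun x => ev (exp (ρ x))) (ev.comp ((1 : _ →L[𝕜] _).comp ρ)) 0 :=
    ev.hasStrictFDerivAt.comp 0 (hexp.comp 0 ρ.hasStrictFDerivAt)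
  simpa [ev] using! hderiv.map_nhds_eq_of_surj (LinearMap.range_eq_top.mpr h)

end Apply

section Conjugation

variable {B : Type*} [NormedRing B] [NormedAlgebra 𝕜 B] [CompleteSpace B]

theorem exp_mul_apply (a b : B) : exp (ContinuousLinearMap.mul 𝕜 B a) b = exp a * b := by
  refine (hasSum_exp_apply (𝕜 := 𝕜) _ b).unique ?_
  have hpow (n : ℕ) : (ContinuousLinearMap.mul 𝕜 B a ^ n) b = a ^ n * b := by
    rw [FunLike.coe_pow_eq_iterate]
    exact congrFun (mul_left_iterate a n) b
  simpa [hpow] using (exp_series_hasSum_exp' (𝕂 := 𝕜) a).mul_right b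

theorem exp_flip_mul_apply (a b : B) :
    exp ((ContinuousLinearMap.mul 𝕜 B).flip a) b = b * exp a := by
  refine (hasSum_exp_apply (𝕜 := 𝕜) _ b).unique ?_
  have hpow (n : ℕ) : ((ContinuousLinearMap.mul 𝕜 B).flip a ^ n) b = b * a ^ n := by
    rw [FunLike.coe_pow_eq_iterate]
    exact congrFun (mul_right_iterate a n) b
  simpa [hpow] using (exp_series_hasSum_exp' (𝕂 := 𝕜) a).mul_left b

theorem exp_mul_sub_flip_mul_apply (a b : B) :
    exp (ContinuousLinearMap.mul 𝕜 B a - (ContinuousLinearMap.mul 𝕜 B).flip a) b =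
      exp a * b * exp (-a) := by
  have hcomm : Commute (ContinuousLinearMap.mul 𝕜 B a)
      ((ContinuousLinearMap.mul 𝕜 B).flip (-a)) := by
    ext c
    simp [mul_assoc]
  let : NormedAlgebra ℚ (B →L[𝕜] B) := .restrictScalars ℚ 𝕜 _
  rw [sub_eq_add_neg, ← map_neg, exp_add_of_commute hcomm, mul_apply_eq_comp,
    exp_flip_mul_apply, exp_mul_apply, mul_assoc]

theorem exp_mul_mul_exp_neg_mem {S : Submodule 𝕜 B} (hS : IsClosed (S : Set B)) {a b : B}
    (ha : ∀ c ∈ S, a * c - c * a ∈ S) (hb : b ∈ S) : exp a * b * exp (-a) ∈ S := by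
  rw [← exp_mul_sub_flip_mul_apply (𝕜 := 𝕜)]
  exact exp_apply_mem_of_isClosed hS ha hb

theorem exp_mul_mul_exp_neg_mem_iff {S : Submodule 𝕜 B} (hS : IsClosed (S : Set B)) {a b : B}
    (ha : ∀ c ∈ S, a * c - c * a ∈ S) : exp a * b * exp (-a) ∈ S ↔ b ∈ S := by
  refine ⟨fun h => ?_, exp_mul_mul_exp_neg_mem hS ha⟩
  let : NormedAlgebra ℚ B := .restrictScalars ℚ 𝕜 B
  have hinv : exp (-a) * exp a = 1 := (invertibleExp a).invOf_mul_self
  have hb : exp (-a) * (exp a * b * exp (-a)) * exp (-(-a)) = b := by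
    rw [neg_neg, mul_assoc, mul_assoc, mul_assoc, hinv, mul_one, ← mul_assoc, hinv, one_mul]
  rw [← hb]
  refine exp_mul_mul_exp_neg_mem hS (fun c hc => ?_) h
  convert S.neg_mem (ha c hc) using 1
  noncomm_ring

end Conjugation

end Exponential

/-- Left symmetry of a bilinear product: the associator `x · (y · z) - (x · y) · z` is symmetric
in `x` and `y`. -/
def IsLeftSymmetric {R A : Type*} [CommRing R] [AddCommGroup A] [Module R A]
    (mul : A →ₗ[R] A →ₗ[R] A) : Prop :=
  ∀ x y z : A, mul x (mul y z) - mul (mul x y) z = mul y (mul x z) - mul (mul y x) z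

/-- The action `v ↦ x · v + x` of an algebra `A` on itself by affine vector fields, realised
linearly on `A × R`; the original affine space is the hyperplane `A × {1}`. -/
def affineRep {R A : Type*} [CommRing R] [AddCommGroup A] [Module R A]
    (mul : A →ₗ[R] A →ₗ[R] A) : A →ₗ[R] Module.End R (A × R) :=
  LinearMap.mk₂ R (fun x v => (mul x v.1 + v.2 • x, 0))
    (fun x y v => by simp [add_add_add_comm])
    (fun c x v => by simp [smul_comm c])
    (fun x v w => by simp [add_smul, add_add_add_comm])
    (fun c x v => by simp [mul_smul])

namespace affineRep

section Basic

variable {R A : Type*} [CommRing R] [AddCommGroup A] [Module R A] (mul : A →ₗ[R] A →ₗ[R] A)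

@[simp]
theorem apply_apply (x : A) (v : A × R) : affineRep mul x v = (mul x v.1 + v.2 • x, 0) := rfl

theorem injective : Function.Injective (affineRep mul) := fun x y h => by
  simpa using LinearMap.congr_fun h (0, 1)

variable {mul}

theorem mul_sub_mul (hls : IsLeftSymmetric mul) (x y : A) :
    affineRep mul x * affineRep mul y - affineRep mul y * affineRep mul x =
      affineRep mul (mul x y - mul y x) := by
  refine LinearMap.ext fun v => Prod.ext ?_ (by simp)
  simp only [LinearMap.sub_apply, Module.End.mul_apply, apply_apply, map_add, map_smul, map_sub,
    Prod.fst_sub, zero_smul, add_zero]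
  linear_combination (norm := module) hls x y v.1

theorem mk_zero_mem_maxGenEigenspace_iff {c : R} {y a : A} :
    (a, (0 : R)) ∈ (affineRep mul y).maxGenEigenspace c ↔ a ∈ maxGenEigenspace (mul y) c :=
  map_mem_maxGenEigenspace_iff (f := LinearMap.inl R A R) LinearMap.inl_injective
    (S := mul y) fun a => by simp

theorem mk_one_mem_maxGenEigenspace_zero_iff {y p : A} :
    (p, (1 : R)) ∈ (affineRep mul y).maxGenEigenspace 0 ↔
      mul y p + y ∈ maxGenEigenspace (mul y) 0 := by
  have happly : affineRep mul y (p, 1) = (mul y p + y, 0) := by simp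
  rw [← mk_zero_mem_maxGenEigenspace_iff, ← happly]
  exact ⟨fun h => mapsTo_maxGenEigenspace_of_comm rfl 0 h, mem_maxGenEigenspace_zero_of_apply_mem⟩

theorem bijective_mul_flip_add_id {p : A} (hp : IsNilpotent (mul.flip p)) :
    Function.Bijective fun x => mul x p + x := by
  simpa using! (Module.End.isUnit_iff _).mp hp.isUnit_add_one

end Basic

section Normalizer

variable {R A : Type*} [CommRing R] [AddCommGroup A] [Module R A]

/-- The normalizer of the image of the affine representation in the general linear group of
`A × R`, defined by conjugation preserving membership in the image. -/
def normalizer (mul : A →ₗ[R] A →ₗ[R] A) : Subgroup ((A × R) ≃ₗ[R] (A × R)) where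
  carrier := {g | ∀ T, g.conj T ∈ LinearMap.range (affineRep mul) ↔
    T ∈ LinearMap.range (affineRep mul)}
  one_mem' := fun _ => Iff.rfl
  mul_mem' := fun {g _} hg hh T => (hg _).trans (hh T)
  inv_mem' := fun {g} hg T => by
    have h := hg (g⁻¹.conj T)
    rw [show g.conj (g⁻¹.conj T) = T from g.conj.apply_symm_apply T] at h
    exact h.symm

end Normalizer

section Transitive

variable {𝕜 E : Type*} [RCLike 𝕜] [NormedAddCommGroup E] [NormedSpace 𝕜 E] [FiniteDimensional 𝕜 E]

/-- The affine representation with values in continuous linear maps, where it can be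
exponentiated. -/
def toCLM (mul : E →ₗ[𝕜] E →ₗ[𝕜] E) : E →ₗ[𝕜] (E × 𝕜) →L[𝕜] (E × 𝕜) :=
  (Module.End.toContinuousLinearMap (E × 𝕜)).toLinearMap ∘ₗ affineRep mul

variable {mul : E →ₗ[𝕜] E →ₗ[𝕜] E}

@[simp]
theorem toCLM_apply (x : E) (v : E × 𝕜) : toCLM mul x v = affineRep mul x v := rfl

theorem mem_range_toCLM_iff {T : Module.End 𝕜 (E × 𝕜)} :
    Module.End.toContinuousLinearMap (E × 𝕜) T ∈ LinearMap.range (toCLM mul) ↔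
      T ∈ LinearMap.range (affineRep mul) :=
  exists_congr fun _ => (Module.End.toContinuousLinearMap (E × 𝕜)).injective.eq_iff

theorem exists_mem_normalizer_coe_eq_exp (hls : IsLeftSymmetric mul) (x : E) :
    ∃ g ∈ normalizer mul, ⇑g = exp (toCLM mul x) := by
  have : CompleteSpace E := FiniteDimensional.complete 𝕜 E
  let : NormedAlgebra ℚ ((E × 𝕜) →L[𝕜] (E × 𝕜)) := .restrictScalars ℚ 𝕜 _
  let := invertibleExp (toCLM mul x)
  let g : (E × 𝕜) ≃L[𝕜] (E × 𝕜) := .ofUnit (unitOfInvertible (exp (toCLM mul x)))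
  refine ⟨g.toLinearEquiv, fun T => ?_, rfl⟩
  have hclosed : IsClosed (LinearMap.range (toCLM mul) : Set ((E × 𝕜) →L[𝕜] (E × 𝕜))) :=
    Submodule.closed_of_finiteDimensional _
  rw [← mem_range_toCLM_iff, ← mem_range_toCLM_iff (T := T),
    ← exp_mul_mul_exp_neg_mem_iff hclosed (a := toCLM mul x)
      (b := Module.End.toContinuousLinearMap (E × 𝕜) T) ?_]
  · rfl
  · rintro _ ⟨z, rfl⟩
    exact ⟨mul x z - mul z x, ContinuousLinearMap.ext fun v =>
      (LinearMap.congr_fun (mul_sub_mul hls x z) v).symm⟩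

theorem map_exp_nhds_zero (hcomplete : ∀ x, IsNilpotent (mul.flip x)) (p : E) :
    Filter.map (fun x => (exp (toCLM mul x) (p, 1)).1) (𝓝 0) = 𝓝 p := by
  have : CompleteSpace E := FiniteDimensional.complete 𝕜 E
  refine map_exp_apply_nhds_zero_of_surjective (LinearMap.toContinuousLinearMap (toCLM mul))
    (ContinuousLinearMap.fst 𝕜 E 𝕜) (p, 1) ?_
  simpa using! (bijective_mul_flip_add_id (hcomplete p)).surjective

theorem exists_mem_normalizer_map_of_normed (hls : IsLeftSymmetric mul)
    (hcomplete : ∀ x, IsNilpotent (mul.flip x)) (p q : E) :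
    ∃ g ∈ normalizer mul, g (p, 1) = (q, 1) := by
  have : CompleteSpace E := FiniteDimensional.complete 𝕜 E
  let : NormedSpace ℝ E := .restrictScalars ℝ 𝕜 E
  let P (p q : E) : Prop := ∃ g ∈ normalizer mul, g (p, 1) = (q, 1)
  have hsymm : Std.Symm P := ⟨fun _ _ ⟨g, hg, hpq⟩ =>
    ⟨g⁻¹, inv_mem hg, g.symm_apply_eq.mpr hpq.symm⟩⟩
  have htrans : IsTrans E P := ⟨fun _ _ _ ⟨g, hg, hpq⟩ ⟨g', hg', hqr⟩ =>
    ⟨g' * g, mul_mem hg' hg, (congrArg g' hpq).trans hqr⟩⟩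
  refine PreconnectedSpace.induction₂ P (fun p => ?_) htrans p q
  rw [← map_exp_nhds_zero hcomplete p, Filter.eventually_map]
  refine Filter.Eventually.of_forall fun x => ?_
  obtain ⟨g, hg, hgx⟩ := exists_mem_normalizer_coe_eq_exp hls x
  refine ⟨g, hg, Prod.ext (by rw [hgx]) ?_⟩
  rw [hgx]
  exact map_exp_apply_of_map_apply_eq_zero (f := ContinuousLinearMap.snd 𝕜 E 𝕜) (fun _ => rfl) _

theorem exists_mem_normalizer_map {A : Type*} [AddCommGroup A] [Module 𝕜 A] [FiniteDimensional 𝕜 A]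
    {mul : A →ₗ[𝕜] A →ₗ[𝕜] A} (hls : IsLeftSymmetric mul)
    (hcomplete : ∀ x, IsNilpotent (mul.flip x)) (p q : A) :
    ∃ g ∈ normalizer mul, g (p, 1) = (q, 1) := by
  let e := (Module.finBasis 𝕜 A).equivFun
  let : NormedAddCommGroup A := NormedAddCommGroup.induced A _ e e.injective
  let : NormedSpace 𝕜 A := NormedSpace.induced 𝕜 A _ e
  exact exists_mem_normalizer_map_of_normed hls hcomplete p q

end Transitive

section Lie

attribute [local instance] LieRing.ofAssociativeRing

section CommRing

variable {R A : Type*} [CommRing R] [LieRing A] [LieAlgebra R A] {mul : A →ₗ[R] A →ₗ[R] A}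

/-- The affine representation as a homomorphism of Lie algebras. -/
def lieHom (hbr : ∀ x y : A, ⁅x, y⁆ = mul x y - mul y x) (hls : IsLeftSymmetric mul) :
    A →ₗ⁅R⁆ Module.End R (A × R) where
  toLinearMap := affineRep mul
  map_lie' {x y} := by
    change affineRep mul ⁅x, y⁆ = ⁅affineRep mul x, affineRep mul y⁆
    rw [hbr, ← mul_sub_mul hls, LieRing.of_associative_ring_bracket]

theorem apply_mem_maxGenEigenspace (hbr : ∀ x y : A, ⁅x, y⁆ = mul x y - mul y x)
    (hls : IsLeftSymmetric mul) {c d : R} {x y : A} {v : A × R}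
    (hx : x ∈ (LieAlgebra.ad R A y).maxGenEigenspace c)
    (hv : v ∈ (affineRep mul y).maxGenEigenspace d) :
    affineRep mul x v ∈ (affineRep mul y).maxGenEigenspace (c + d) := by
  let : LieRingModule A (A × R) := LieRingModule.compLieHom _ (lieHom hbr hls)
  let : LieModule R A (A × R) := LieModule.compLieHom _ (lieHom hbr hls)
  exact LieModule.lie_mem_maxGenEigenspace_toEnd hx hv

theorem exists_lieEquiv_conj_eq (hbr : ∀ x y : A, ⁅x, y⁆ = mul x y - mul y x)
    (hls : IsLeftSymmetric mul) {g : (A × R) ≃ₗ[R] (A × R)} (hg : g ∈ normalizer mul) :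
    ∃ φ : A ≃ₗ⁅R⁆ A, ∀ x, affineRep mul (φ x) = g.conj (affineRep mul x) := by
  let e : A ≃ₗ⁅R⁆ (lieHom hbr hls).range :=
    LieEquiv.ofInjective (lieHom hbr hls) (injective mul)
  have hmap : (lieHom hbr hls).range.map g.lieConj = (lieHom hbr hls).range := by
    ext T
    obtain ⟨T, rfl⟩ := g.lieConj.surjective T
    exact (g.lieConj.injective.mem_set_image (s := (lieHom hbr hls).range)).trans (hg T).symm
  let c := LieEquiv.ofSubalgebras _ _ g.lieConj hmap
  refine ⟨(e.trans c).trans e.symm, fun x => ?_⟩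
  exact congrArg Subtype.val (e.apply_symm_apply (c (e x)))

end CommRing

section RCLike

variable {𝕜 A : Type*} [RCLike 𝕜] [LieRing A] [LieAlgebra 𝕜 A] [FiniteDimensional 𝕜 A]
  {mul : A →ₗ[𝕜] A →ₗ[𝕜] A}

theorem exists_isCartanSubalgebra_engel_self_mem_maxGenEigenspace
    (hbr : ∀ x y : A, ⁅x, y⁆ = mul x y - mul y x) (hls : IsLeftSymmetric mul)
    (hcomplete : ∀ x, IsNilpotent (mul.flip x)) :
    ∃ y : A, (LieSubalgebra.engel 𝕜 y).IsCartanSubalgebra ∧ y ∈ maxGenEigenspace (mul y) 0 := by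
  obtain ⟨y, hy⟩ := LieAlgebra.exists_isCartanSubalgebra_engel 𝕜 A
  obtain ⟨p, hp⟩ := exists_apply_add_mem_maxGenEigenspace_zero (mul y) y
  obtain ⟨g, hg, hgp⟩ := exists_mem_normalizer_map hls hcomplete p 0
  obtain ⟨φ, hφ⟩ := exists_lieEquiv_conj_eq hbr hls hg
  have hmap : g (p, 1) ∈ (affineRep mul (φ y)).maxGenEigenspace 0 :=
    (map_mem_maxGenEigenspace_iff (f := g.toLinearMap) g.injective (S := affineRep mul y)
      fun v => by simp [hφ, LinearEquiv.conj_apply_apply]).mpr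
      (mk_one_mem_maxGenEigenspace_zero_iff.mpr hp)
  refine ⟨φ y, isCartanSubalgebra_engel_map hy φ, ?_⟩
  rwa [hgp, mk_one_mem_maxGenEigenspace_zero_iff, map_zero, zero_add] at hmap

end RCLike

section Field

variable {K A : Type*} [Field K] [LieRing A] [LieAlgebra K A]
  [LieModule.IsTriangularizable K A A] {mul : A →ₗ[K] A →ₗ[K] A}

theorem maxGenEigenspace_ad_eq (hbr : ∀ x y : A, ⁅x, y⁆ = mul x y - mul y x)
    (hls : IsLeftSymmetric mul) {y : A} (hy : y ∈ maxGenEigenspace (mul y) 0) (c : K) :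
    (LieAlgebra.ad K A y).maxGenEigenspace c = maxGenEigenspace (mul y) c := by
  have hy' : ((0 : A), (1 : K)) ∈ (affineRep mul y).maxGenEigenspace 0 := by
    rwa [mk_one_mem_maxGenEigenspace_zero_iff, map_zero, zero_add]
  refine congrFun (((independent_maxGenEigenspace (mul y)).le_iff_eq_of_iSup_eq_top
    (LieModule.IsTriangularizable.maxGenEigenspace_eq_top (L := A) (M := A) y)).mp
      fun c x hx => ?_) c
  rw [← mk_zero_mem_maxGenEigenspace_iff]
  simpa only [apply_apply, map_zero, one_smul, zero_add, add_zero] using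
    apply_mem_maxGenEigenspace hbr hls hx hy'

theorem mul_mem_engel (hbr : ∀ x y : A, ⁅x, y⁆ = mul x y - mul y x) (hls : IsLeftSymmetric mul)
    {y : A} (hy : y ∈ maxGenEigenspace (mul y) 0) {x u : A} (hx : x ∈ LieSubalgebra.engel K y)
    (hu : u ∈ LieSubalgebra.engel K y) : mul x u ∈ LieSubalgebra.engel K y := by
  have hU {u : A} : u ∈ LieSubalgebra.engel K y ↔ u ∈ maxGenEigenspace (mul y) 0 :=
    SetLike.ext_iff.mp (maxGenEigenspace_ad_eq hbr hls hy 0) u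
  rw [hU, ← mk_zero_mem_maxGenEigenspace_iff] at hu ⊢
  simpa using apply_mem_maxGenEigenspace hbr hls (c := 0) hx hu

theorem mem_maxGenEigenspace_self_of_mem_engel [FiniteDimensional K A]
    (hbr : ∀ x y : A, ⁅x, y⁆ = mul x y - mul y x) (hls : IsLeftSymmetric mul)
    (hcomplete : ∀ x, IsNilpotent (mul.flip x)) {y : A}
    (hcartan : (LieSubalgebra.engel K y).IsCartanSubalgebra)
    (hy : y ∈ maxGenEigenspace (mul y) 0) {h : A} (hh : h ∈ LieSubalgebra.engel K y) :
    h ∈ maxGenEigenspace (mul h) 0 := by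
  let U : Submodule K A := (LieSubalgebra.engel K y).toSubmodule
  have hmul : ∀ x ∈ U, ∀ u ∈ U, mul x u ∈ U := fun x hx u hu => mul_mem_engel hbr hls hy hx hu
  obtain ⟨⟨p, hpU⟩, hp⟩ := exists_apply_add_mem_maxGenEigenspace_zero
    ((mul h).restrict (hmul h hh)) ⟨h, hh⟩
  have hp' : (p, (1 : K)) ∈ (affineRep mul h).maxGenEigenspace 0 :=
    mk_one_mem_maxGenEigenspace_zero_iff.mpr
      ((map_mem_maxGenEigenspace_iff (f := U.subtype) U.injective_subtype
        (T := mul h) fun _ => rfl).mpr hp)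
  have hT : ∀ x ∈ U, (mul.flip p + 1) x ∈ U := fun x hx => U.add_mem (hmul x hx p hpU) hx
  have hsurj : Function.Surjective ((mul.flip p + 1).restrict hT) :=
    LinearMap.surjective_of_injective fun a b hab =>
      Subtype.ext ((bijective_mul_flip_add_id (hcomplete p)).injective (congrArg Subtype.val hab))
  obtain ⟨⟨x, hxU⟩, hx⟩ := hsurj ⟨h, hh⟩
  have hxp : mul x p + x = h := congrArg Subtype.val hx
  have hxh : x ∈ LieSubalgebra.engel K h := isCartanSubalgebra_engel_iff.mp hcartan h hh hxU
  rw [← mk_zero_mem_maxGenEigenspace_iff]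
  simpa [hxp] using apply_mem_maxGenEigenspace hbr hls (c := 0) hxh hp'

end Field

end Lie

end affineRep

theorem leftSymmetric_complete_canonical_decomposition_general {𝕜 A : Type*} [RCLike 𝕜]
    [LieRing A] [LieAlgebra 𝕜 A] [FiniteDimensional 𝕜 A] [LieModule.IsTriangularizable 𝕜 A A]
    (mul : A →ₗ[𝕜] A →ₗ[𝕜] A)
    (hbr : ∀ x y : A, ⁅x, y⁆ = mul x y - mul y x)
    (hls : IsLeftSymmetric mul)
    (hcomplete : ∀ x : A, IsNilpotent (mul.flip x)) :
    ∃ H : LieSubalgebra 𝕜 A, H.IsCartanSubalgebra ∧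
      ∀ χ : H → 𝕜,
        (⨅ x : H, maxGenEigenspace (mul (x : A)) (χ x)) =
          ⨅ x : H, maxGenEigenspace (mul (x : A) - mul.flip (x : A)) (χ x) := by
  obtain ⟨y, hcartan, hy⟩ :=
    affineRep.exists_isCartanSubalgebra_engel_self_mem_maxGenEigenspace hbr hls hcomplete
  refine ⟨LieSubalgebra.engel 𝕜 y, hcartan, fun χ => iInf_congr fun x => ?_⟩
  have had : mul (x : A) - mul.flip (x : A) = LieAlgebra.ad 𝕜 A (x : A) :=
    LinearMap.ext fun z => (hbr x z).symm
  rw [had, affineRep.maxGenEigenspace_ad_eq hbr hls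
    (affineRep.mem_maxGenEigenspace_self_of_mem_engel hbr hls hcomplete hcartan hy x.2)]

/-- Every finite-dimensional complete left-symmetric algebra over `ℂ` admits a canonical
decomposition: there is a Cartan subalgebra `H` of the commutator Lie algebra such that
the root decompositions for `L` and `ad` coincide. -/
theorem leftSymmetric_complete_canonical_decomposition (A : Type*)
    [LieRing A] [LieAlgebra ℂ A] [FiniteDimensional ℂ A]
    (mul : A →ₗ[ℂ] A →ₗ[ℂ] A)
    (hbr : ∀ x y : A, ⁅x, y⁆ = mul x y - mul y x)
    (hls : ∀ x y z : A,
      mul x (mul y z) - mul (mul x y) z = mul y (mul x z) - mul (mul y x) z)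
    (hcomplete : ∀ x : A, IsNilpotent (mul.flip x)) :
    ∃ H : LieSubalgebra ℂ A, H.IsCartanSubalgebra ∧
      ∀ χ : H → ℂ,
        (⨅ x : H, Module.End.maxGenEigenspace (mul (x : A)) (χ x)) =
          ⨅ x : H, Module.End.maxGenEigenspace (mul (x : A) - mul.flip (x : A)) (χ x) :=
  leftSymmetric_complete_canonical_decomposition_general mul hbr hls hcomplete
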